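/- Let θ be a cylindric diagram in C_ω. The map hk : (θ, ≤) → (R(w_θ), ⊴) is an order isomorphism: hk is a bijection from θ onto R(w_θ) = {hk(x) : x ∈ θ}, and for all x, y ∈ θ one has x ≤ y if and only if hk(x) ⊴ hk(y). -/

import Mathlib

/-!
The preimage `Θ` of `θ` in the plane is bounded by a staircase, whose edges carry integer labels:
`A a = f a - a + 1` at the end of row `a` and `B b = b - g b` at the end of column `b`, where
`f a` is the last column of row `a` and `g b` the last row of column `b`. No label is both
a row end and a column end, and both families are periodic modulo `κ = m + ℓ`.

The arm and the leg of a cell traverse consecutive contents, so the hook of `(a, b)` is the sum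
of the simple roots `α_j`, `B b ≤ j < A a`, with indices read modulo `κ` (`Profile.hk_eq`). The set
`Π_θ` consists of the sums of simple roots between two consecutive row-end labels, or between two
consecutive column-end labels (`Profile.A_step`, `Profile.B_step`, `Profile.splits_generator`).

Hence `x ≤ y` gives `hk x ⊴ hk y`: lowering `a` or `b` extends the interval at its right or left
end by elements of `Π_θ`. Conversely, the coefficients of a nonnegative combination of elements of
`Π_θ`, as a function of the integer index, have the form `U + W` with `U, W ≥ 0`, where `U` jumps
only at row ends and `W` only at column ends. For `hk y - hk x` counting residues in intervals
gives another decomposition `U' + W'` of this kind. Since no label is of both kinds,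
`U' - U = W - W'` never jumps and is a constant `C`. From `U' ≥ C` and `W' ≥ -C`, evaluated at
suitable indices, one reads off a translate of the lift of `y` by a multiple of `ω` whose
coordinates are at most those of the lift of `x` (`Profile.cle_of_trile`). Injectivity follows by
antisymmetry.
-/

namespace CylPaper

/-! ## The cylinder and its order -/

abbrev Z2 : Type := ℤ × ℤ

/-- The partial order on ℤ²: (a,b) ≤ (c,d) iff a ≥ c and b ≥ d. -/
def le2 (x y : Z2) : Prop := y.1 ≤ x.1 ∧ y.2 ≤ x.2

/-- The period ω = (m, -ℓ). -/
def om (m l : ℕ) : Z2 := ((m : ℤ), -(l : ℤ))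

/-- The cylinder C_ω = ℤ²/ℤω. -/
abbrev Cyl (m l : ℕ) : Type := Z2 ⧸ AddSubgroup.zmultiples (om m l)

/-- The natural projection π : ℤ² → C_ω. -/
def pr (m l : ℕ) : Z2 →+ Cyl m l := QuotientAddGroup.mk' _

/-- The induced order relation on the cylinder: x ≤ y iff there are lifts with x̃ ≤ ỹ. -/
def cle (m l : ℕ) (x y : Cyl m l) : Prop :=
  ∃ a b : Z2, pr m l a = x ∧ pr m l b = y ∧ le2 a b

/-- A cylindric diagram: a non-trivial order filter of C_ω. -/
def IsCylindric (m l : ℕ) (θ : Set (Cyl m l)) : Prop :=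
  θ.Nonempty ∧ θ ≠ Set.univ ∧ ∀ x ∈ θ, ∀ y, cle m l x y → y ∈ θ

/-- A periodic diagram of period ω: a non-trivial order filter of ℤ² with Θ + ω = Θ. -/
def IsPeriodic (m l : ℕ) (Θ : Set Z2) : Prop :=
  Θ.Nonempty ∧ Θ ≠ Set.univ ∧ (∀ x ∈ Θ, ∀ y, le2 x y → y ∈ Θ) ∧
    (fun p => p + om m l) '' Θ = Θ

/-- A proper order ideal ξ of the sub-poset θ of C_ω. -/
def IsProperIdealOf (m l : ℕ) (θ ξ : Set (Cyl m l)) : Prop :=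
  ξ ⊆ θ ∧ ξ ≠ θ ∧ ∀ x ∈ ξ, ∀ y ∈ θ, cle m l y x → y ∈ ξ

/-- A proper order ideal of the whole cylinder C_ω. -/
def IsProperIdealC (m l : ℕ) (J : Set (Cyl m l)) : Prop :=
  J ≠ Set.univ ∧ ∀ x ∈ J, ∀ y, cle m l y x → y ∈ J

/-- A proper order filter of the whole cylinder C_ω. -/
def IsProperFilterC (m l : ℕ) (J : Set (Cyl m l)) : Prop :=
  J ≠ Set.univ ∧ ∀ x ∈ J, ∀ y, cle m l x y → y ∈ J

/-! ## The content map -/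

/-- The content on ℤ²: (a,b) ↦ b - a mod κ (κ = m + ℓ). -/
def conHom (m l : ℕ) : Z2 →+ ZMod (m + l) where
  toFun p := ((p.2 - p.1 : ℤ) : ZMod (m + l))
  map_zero' := by simp
  map_add' a b := by
    simp only [Prod.fst_add, Prod.snd_add]
    push_cast
    ring

lemma conHom_om (m l : ℕ) : conHom m l (om m l) = 0 := by
  have h : ((m + l : ℕ) : ZMod (m + l)) = 0 := ZMod.natCast_self _
  show ((((om m l).2 - (om m l).1 : ℤ)) : ZMod (m + l)) = 0
  simp only [om]
  push_cast at h ⊢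
  linear_combination -h

/-- The content map con : C_ω → ℤ/κℤ. -/
def con (m l : ℕ) : Cyl m l →+ ZMod (m + l) :=
  QuotientAddGroup.lift _ (conHom m l) (by
    intro x hx
    obtain ⟨k, rfl⟩ := AddSubgroup.mem_zmultiples_iff.mp hx
    simp only [AddMonoidHom.mem_ker, map_zsmul, conHom_om, smul_zero])

/-! ## The affine root system of type A_{κ-1}^{(1)} -/

/-- h*, with coordinates in the basis {α_i (i ∈ ℤ/κℤ), Λ₀}:
`(c, t)` stands for `Σ_i c_i α_i + t Λ₀`. -/
abbrev Hw (κ : ℕ) : Type := (ZMod κ → ℚ) × ℚ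

/-- The affine Cartan matrix of type A_{κ-1}^{(1)} (valid for κ ≥ 2). -/
def cartan (κ : ℕ) (i j : ZMod κ) : ℚ :=
  (if i = j then 2 else 0) + (if i - j = 1 then -1 else 0) + (if i - j = -1 then -1 else 0)

/-- The simple root α_i. -/
def alphaR (κ : ℕ) (i : ZMod κ) : Hw κ := (Pi.single i 1, 0)

/-- The null root δ = Σ_i α_i. -/
def deltaR (κ : ℕ) : Hw κ := (fun _ => 1, 0)

/-- The pairing ⟨ζ, α_i^∨⟩. -/
noncomputable def pairSimple (κ : ℕ) (ζ : Hw κ) (i : ZMod κ) : ℚ :=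
  (∑ᶠ j, ζ.1 j * cartan κ i j) + ζ.2 * (if i = 0 then 1 else 0)

/-- The pairing ⟨ζ, β^∨⟩ where β = Σ_i k_i α_i lies in the root lattice,
so β^∨ = Σ_i k_i α_i^∨. -/
noncomputable def pairCo (κ : ℕ) (ζ β : Hw κ) : ℚ := ∑ᶠ i, β.1 i * pairSimple κ ζ i

/-- The simple reflection s_i : ζ ↦ ζ - ⟨ζ, α_i^∨⟩ α_i, as a map on h*. -/
noncomputable def sFun (κ : ℕ) (i : ZMod κ) (ζ : Hw κ) : Hw κ :=
  ζ - pairSimple κ ζ i • alphaR κ i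

/-- The element s_{i₁} s_{i₂} ⋯ s_{i_r} of the affine Weyl group
given by a word [i₁, i₂, …, i_r]. -/
noncomputable def wordProd (κ : ℕ) (L : List (ZMod κ)) : Hw κ → Hw κ :=
  (L.map (sFun κ)).foldr (· ∘ ·) id

/-- Membership in the affine Weyl group W (generated by the s_i). -/
def Wmem (κ : ℕ) (w : Hw κ → Hw κ) : Prop := ∃ L : List (ZMod κ), wordProd κ L = w

/-- The Coxeter length: the least r such that w is a product of r simple reflections. -/
noncomputable def len (κ : ℕ) (w : Hw κ → Hw κ) : ℕ :=
  sInf {r : ℕ | ∃ L : List (ZMod κ), L.length = r ∧ wordProd κ L = w}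

/-- Q₊ = Σ_i ℤ≥0 α_i. -/
def QPos (κ : ℕ) : Set (Hw κ) := {x | x.2 = 0 ∧ ∀ i, ∃ n : ℕ, x.1 i = (n : ℚ)}

/-- The set R = WΠ of real roots. -/
def Rset (κ : ℕ) : Set (Hw κ) :=
  {β | ∃ (L : List (ZMod κ)) (i : ZMod κ), β = wordProd κ L (alphaR κ i)}

/-- Positive real roots R₊ = R ∩ Q₊. -/
def Rpos (κ : ℕ) : Set (Hw κ) := Rset κ ∩ QPos κ

/-- Negative real roots R₋ = -R₊. -/
def Rneg (κ : ℕ) : Set (Hw κ) := {β | -β ∈ Rpos κ}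

/-- The inversion set R(w) = R₊ ∩ w R₋. -/
def invSet (κ : ℕ) (w : Hw κ → Hw κ) : Set (Hw κ) := Rpos κ ∩ (w '' Rneg κ)

/-- The weak right Bruhat order on W. -/
def wble (κ : ℕ) (v w : Hw κ → Hw κ) : Prop :=
  Relation.ReflTransGen
    (fun u u' => ∃ i : ZMod κ, u' = u ∘ sFun κ i ∧ len κ u' = len κ u + 1) v w

/-- The weak Bruhat interval [e, w]. -/
def bint (κ : ℕ) (w : Hw κ → Hw κ) : Set (Hw κ → Hw κ) :=
  {x | wble κ id x ∧ wble κ x w}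

/-- A single commutation move on words: swap adjacent letters i, j with i - j ≠ 0, ±1. -/
def CommMove (κ : ℕ) (L1 L2 : List (ZMod κ)) : Prop :=
  ∃ (u v : List (ZMod κ)) (i j : ZMod κ),
    i - j ≠ 0 ∧ i - j ≠ 1 ∧ i - j ≠ -1 ∧
    L1 = u ++ i :: j :: v ∧ L2 = u ++ j :: i :: v

/-- A word is reduced if its length equals the Coxeter length of its product. -/
def IsReducedWord (κ : ℕ) (L : List (ZMod κ)) : Prop :=
  len κ (wordProd κ L) = L.length

/-- Fully commutative: any reduced word for w can be obtained from any other
using only commutation moves. -/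
def FullyComm (κ : ℕ) (w : Hw κ → Hw κ) : Prop :=
  ∀ L1 L2 : List (ZMod κ),
    IsReducedWord κ L1 → wordProd κ L1 = w →
    IsReducedWord κ L2 → wordProd κ L2 = w →
    Relation.ReflTransGen (CommMove κ) L1 L2

/-! ## Hooks, bottom set and weights attached to a cylindric diagram -/

/-- α(x) = α_{con(x)}. -/
def alC (m l : ℕ) (x : Cyl m l) : Hw (m + l) := alphaR (m + l) (con m l x)

/-- arm(x) = {x + π(0,k) : k ≥ 1} ∩ θ. -/
def armSet (m l : ℕ) (θ : Set (Cyl m l)) (x : Cyl m l) : Set (Cyl m l) :=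
  {y | y ∈ θ ∧ ∃ k : ℕ, 1 ≤ k ∧ y = x + pr m l (0, (k : ℤ))}

/-- leg(x) = {x + π(k,0) : k ≥ 1} ∩ θ. -/
def legSet (m l : ℕ) (θ : Set (Cyl m l)) (x : Cyl m l) : Set (Cyl m l) :=
  {y | y ∈ θ ∧ ∃ k : ℕ, 1 ≤ k ∧ y = x + pr m l ((k : ℤ), 0)}

/-- The colored hook length hk(x) = α(x) + Σ_{y∈arm(x)} α(y) + Σ_{y∈leg(x)} α(y). -/
noncomputable def hk (m l : ℕ) (θ : Set (Cyl m l)) (x : Cyl m l) : Hw (m + l) :=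
  alC m l x + (∑ᶠ y ∈ armSet m l θ x, alC m l y) + (∑ᶠ y ∈ legSet m l θ x, alC m l y)

/-- x is the minimum cell b_i of content i in θ. -/
def IsBottomCell (m l : ℕ) (θ : Set (Cyl m l)) (i : ZMod (m + l)) (x : Cyl m l) : Prop :=
  x ∈ θ ∧ con m l x = i ∧ ∀ y ∈ θ, con m l y = i → cle m l x y

/-- The bottom set Γ = {b_i : i ∈ ℤ/κℤ}. -/
def btm (m l : ℕ) (θ : Set (Cyl m l)) : Set (Cyl m l) :=
  {x | ∃ i, IsBottomCell m l θ i x}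

/-- The maximal elements Γ_max of the bottom set. -/
def btmMax (m l : ℕ) (θ : Set (Cyl m l)) : Set (Cyl m l) :=
  {x | x ∈ btm m l θ ∧ ∀ y ∈ btm m l θ, cle m l x y → y = x}

/-- The minimal elements Γ_min of the bottom set. -/
def btmMin (m l : ℕ) (θ : Set (Cyl m l)) : Set (Cyl m l) :=
  {x | x ∈ btm m l θ ∧ ∀ y ∈ btm m l θ, cle m l y x → y = x}

open Classical in
/-- The coefficient a_i of Λ_i in the predominant weight P_θ:
1 if b_i ∈ Γ_max, -1 if b_i ∈ Γ_min, 0 otherwise. -/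
noncomputable def aC (m l : ℕ) (θ : Set (Cyl m l)) (i : ZMod (m + l)) : ℚ :=
  if ∃ x, IsBottomCell m l θ i x ∧ x ∈ btmMax m l θ then 1
  else if ∃ x, IsBottomCell m l θ i x ∧ x ∈ btmMin m l θ then -1 else 0

/-- The pairing ⟨P_θ, β^∨⟩ = Σ_i a_i k_i for β = Σ_i k_i α_i,
where P_θ = Σ_i a_i Λ_i (since ⟨Λ_i, α_j^∨⟩ = δ_{ij} and ⟨Λ_i, d⟩ = 0). -/
noncomputable def pairP (m l : ℕ) (θ : Set (Cyl m l)) (β : Hw (m + l)) : ℚ :=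
  ∑ᶠ i, aC m l θ i * β.1 i

/-- D(P_θ) = {α ∈ R₊ : ⟨P_θ, α^∨⟩ = -1}. -/
def DSet (m l : ℕ) (θ : Set (Cyl m l)) : Set (Hw (m + l)) :=
  {β | β ∈ Rpos (m + l) ∧ pairP m l θ β = -1}

/-- The "inversion set" R(w_θ) = {hk(x) : x ∈ θ}. -/
def RwTheta (m l : ℕ) (θ : Set (Cyl m l)) : Set (Hw (m + l)) := hk m l θ '' θ

/-- The set Π_θ = Π_θ^0 ∪ Π_θ^arm ∪ Π_θ^leg. -/
def PiTheta (m l : ℕ) (θ : Set (Cyl m l)) : Set (Hw (m + l)) :=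
  {v | ∃ x, x ∈ btm m l θ ∧ x ∉ btmMax m l θ ∧ x ∉ btmMin m l θ ∧ v = alC m l x} ∪
  {v | ∃ x, x ∈ btmMax m l θ ∧ v = alC m l x + ∑ᶠ y ∈ armSet m l θ x, alC m l y} ∪
  {v | ∃ x, x ∈ btmMax m l θ ∧ v = alC m l x + ∑ᶠ y ∈ legSet m l θ x, alC m l y}

/-- The modified order ⊴ on R(w_θ): α ⊴ β iff β - α ∈ Σ_{γ∈Π_θ} ℤ≥0 γ. -/
def trile (m l : ℕ) (θ : Set (Cyl m l)) (α β : Hw (m + l)) : Prop :=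
  β - α ∈ AddSubmonoid.closure (PiTheta m l θ)

/-! ## Standard tableaux (encoded by the inverse enumeration e = T⁻¹ : ℤ≥1 → θ) -/

/-- A standard tableau on θ, given by the enumeration e = T⁻¹ : {1,2,…} → θ.
This is precisely the data of an order-preserving bijection T : θ → ℤ≥1. -/
def IsTableau (m l : ℕ) (θ : Set (Cyl m l)) (e : ℕ → Cyl m l) : Prop :=
  Set.InjOn e {a : ℕ | 1 ≤ a} ∧ e '' {a : ℕ | 1 ≤ a} = θ ∧
  ∀ a b : ℕ, 1 ≤ a → 1 ≤ b → cle m l (e a) (e b) → e a ≠ e b → a < b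

/-- A standard tableau on a finite (skew) diagram ξ with |ξ| = n, encoded by
the enumeration e = S⁻¹ : {1,…,n} → ξ. -/
def IsTableauOn (m l : ℕ) (ξ : Set (Cyl m l)) (n : ℕ) (e : ℕ → Cyl m l) : Prop :=
  Set.InjOn e (Set.Icc 1 n) ∧ e '' Set.Icc 1 n = ξ ∧
  ∀ a b : ℕ, a ∈ Set.Icc 1 n → b ∈ Set.Icc 1 n → cle m l (e a) (e b) → e a ≠ e b → a < b

/-- The word (con(e 1), con(e 2), …, con(e n)). -/
def tabWord (m l : ℕ) (e : ℕ → Cyl m l) (n : ℕ) : List (ZMod (m + l)) :=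
  (List.range n).map (fun k => con m l (e (k + 1)))

/-- The semi-infinite Bruhat interval [e, w_{θ,T}) = ⋃_{n≥1} [e, w_{θ,T}[n]]. -/
def semiInt (m l : ℕ) (e : ℕ → Cyl m l) : Set (Hw (m + l) → Hw (m + l)) :=
  ⋃ n ∈ {n : ℕ | 1 ≤ n}, bint (m + l) (wordProd (m + l) (tabWord m l e n))

/-- w is P_θ-pluscule: ⟨P_θ, α^∨⟩ = -1 for every α ∈ R(w). -/
def Pluscule (m l : ℕ) (θ : Set (Cyl m l)) (w : Hw (m + l) → Hw (m + l)) : Prop :=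
  ∀ β ∈ invSet (m + l) w, pairP m l θ β = -1

/-- The generating relation of the heap order ⪯_T on ℤ≥1. -/
def heapRel (m l : ℕ) (e : ℕ → Cyl m l) (a b : ℕ) : Prop :=
  1 ≤ a ∧ a ≤ b ∧
    (con m l (e a) = con m l (e b) ∨
      sFun (m + l) (con m l (e a)) ∘ sFun (m + l) (con m l (e b)) ≠
        sFun (m + l) (con m l (e b)) ∘ sFun (m + l) (con m l (e a)))

/-- The generating relation of the heap order ≤^hp on R(w_θ):
α ≤ β whenever β - α ∈ Q₊ (the ordinary order) and ⟨α, β^∨⟩ ≠ 0. -/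
def hpRel (m l : ℕ) (θ : Set (Cyl m l)) (α β : Hw (m + l)) : Prop :=
  α ∈ RwTheta m l θ ∧ β ∈ RwTheta m l θ ∧ β - α ∈ QPos (m + l) ∧
    pairCo (m + l) α β ≠ 0

/-- v is the Weyl group element w_ξ of a proper order ideal ξ of θ. -/
def IsIdealWord (m l : ℕ) (θ ξ : Set (Cyl m l)) (v : Hw (m + l) → Hw (m + l)) : Prop :=
  IsProperIdealOf m l θ ξ ∧
    ∃ n e, IsTableauOn m l ξ n e ∧ v = wordProd (m + l) (tabWord m l e n)

/-- A proper order ideal of the poset (R(w_θ), ⊴). -/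
def IsProperIdealOfRw (m l : ℕ) (θ : Set (Cyl m l)) (J : Set (Hw (m + l))) : Prop :=
  J ⊆ RwTheta m l θ ∧ J ≠ RwTheta m l θ ∧
    ∀ β ∈ J, ∀ α ∈ RwTheta m l θ, trile m l θ α β → α ∈ J


/-! ### Lifts to the plane -/

section

variable {m l : ℕ}

lemma pr_eq_iff {a b c d : ℤ} :
    pr m l (a, b) = pr m l (c, d) ↔ ∃ k : ℤ, c = a + k * m ∧ d = b - k * l := by
  have h : pr m l (a, b) = pr m l (c, d) ↔
      -(a, b) + (c, d) ∈ AddSubgroup.zmultiples (om m l) := QuotientAddGroup.eq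
  rw [h, AddSubgroup.mem_zmultiples_iff]
  refine exists_congr fun k => ?_
  simp only [om, Prod.ext_iff, Prod.smul_mk, Prod.fst_add, Prod.snd_add, Prod.fst_neg,
    Prod.snd_neg, smul_eq_mul, mul_neg]
  constructor <;> rintro ⟨h1, h2⟩ <;> constructor <;> linarith

lemma exists_lift (x : Cyl m l) : ∃ a b : ℤ, pr m l (a, b) = x := by
  obtain ⟨⟨a, b⟩, h⟩ := QuotientAddGroup.mk'_surjective _ x
  exact ⟨a, b, h⟩

lemma con_pr (a b : ℤ) : con m l (pr m l (a, b)) = ((b - a : ℤ) : ZMod (m + l)) := rfl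

lemma pr_add (a b c d : ℤ) : pr m l (a, b) + pr m l (c, d) = pr m l (a + c, b + d) := by
  rw [← map_add]; rfl

lemma cle_pr {a b c d : ℤ} :
    cle m l (pr m l (a, b)) (pr m l (c, d)) ↔
      ∃ k : ℤ, c + k * m ≤ a ∧ d - k * l ≤ b := by
  constructor
  · rintro ⟨⟨p, q⟩, ⟨r, s⟩, h1, h2, h3, h4⟩
    obtain ⟨k, rfl, rfl⟩ := pr_eq_iff.1 h1
    obtain ⟨k', rfl, rfl⟩ := pr_eq_iff.1 h2
    simp only at h3 h4
    exact ⟨k - k', by linarith, by linarith⟩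
  · rintro ⟨k, h1, h2⟩
    exact ⟨(a, b), (c + k * m, d - k * l), rfl, (pr_eq_iff.2 ⟨k, rfl, rfl⟩).symm, h1, h2⟩

/-- A comparison in the cylinder lifts to a comparison with any prescribed lift of the
first element. -/
lemma cle_lift_right {a b : ℤ} {y : Cyl m l} (h : cle m l (pr m l (a, b)) y) :
    ∃ c d : ℤ, pr m l (c, d) = y ∧ c ≤ a ∧ d ≤ b := by
  obtain ⟨c, d, rfl⟩ := exists_lift y
  obtain ⟨k, h1, h2⟩ := cle_pr.1 h
  exact ⟨_, _, (pr_eq_iff.2 ⟨k, rfl, rfl⟩).symm, h1, h2⟩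

lemma cle_lift_left {a b : ℤ} {y : Cyl m l} (h : cle m l y (pr m l (a, b))) :
    ∃ c d : ℤ, pr m l (c, d) = y ∧ a ≤ c ∧ b ≤ d := by
  obtain ⟨c, d, rfl⟩ := exists_lift y
  obtain ⟨k, h1, h2⟩ := cle_pr.1 h
  exact ⟨c - k * m, d + k * l, (pr_eq_iff.2 ⟨-k, by ring, by ring⟩).symm,
    by linarith, by linarith⟩

lemma cle_of_le {a b c d : ℤ} (h1 : c ≤ a) (h2 : d ≤ b) :
    cle m l (pr m l (a, b)) (pr m l (c, d)) :=
  ⟨_, _, rfl, rfl, h1, h2⟩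

lemma cle_antisymm (hm : 1 ≤ m) (hl : 1 ≤ l) {x y : Cyl m l}
    (h : cle m l x y) (h' : cle m l y x) : x = y := by
  obtain ⟨a, b, rfl⟩ := exists_lift x
  obtain ⟨c, d, rfl, h1, h2⟩ := cle_lift_right h
  obtain ⟨k, h3, h4⟩ := cle_pr.1 h'
  have hm' : (1 : ℤ) ≤ m := by exact_mod_cast hm
  have hl' : (1 : ℤ) ≤ l := by exact_mod_cast hl
  have k1 : k ≤ 0 := by nlinarith
  have k2 : 0 ≤ k := by nlinarith
  obtain rfl : k = 0 := le_antisymm k1 k2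
  simp only [zero_mul, add_zero, sub_zero] at h3 h4
  rw [le_antisymm h1 h3, le_antisymm h2 h4]

/-! ### The boundary of a cylindric diagram -/

/-- The boundary data of the lift `Θ = π⁻¹(θ)`: `f a` is the largest `b` and `g b` the largest
`a` with `(a, b) ∈ Θ`. -/
structure Profile (m l : ℕ) (θ : Set (Cyl m l)) where
  /-- The last column of each row of `Θ`. -/
  f : ℤ → ℤ
  /-- The last row of each column of `Θ`. -/
  g : ℤ → ℤ
  hm : 1 ≤ m
  hl : 1 ≤ l
  hf : ∀ a b : ℤ, pr m l (a, b) ∈ θ ↔ b ≤ f a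
  hg : ∀ a b : ℤ, pr m l (a, b) ∈ θ ↔ a ≤ g b

lemma exists_profile (hm : 1 ≤ m) (hl : 1 ≤ l) {θ : Set (Cyl m l)} (hθ : IsCylindric m l θ) :
    Nonempty (Profile m l θ) := by
  obtain ⟨⟨x, hx⟩, hne, hup⟩ := hθ
  obtain ⟨y, hy⟩ := (Set.ne_univ_iff_exists_notMem θ).1 hne
  obtain ⟨a0, b0, rfl⟩ := exists_lift x
  obtain ⟨a1, b1, rfl⟩ := exists_lift y
  have hm' : (1 : ℤ) ≤ m := by exact_mod_cast hm
  have hl' : (1 : ℤ) ≤ l := by exact_mod_cast hl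
  have up : ∀ {a b c d : ℤ}, pr m l (a, b) ∈ θ → c ≤ a → d ≤ b → pr m l (c, d) ∈ θ :=
    fun h h1 h2 => hup _ h _ (cle_of_le h1 h2)
  have sh : ∀ k a b : ℤ, pr m l (a + k * m, b - k * l) = pr m l (a, b) :=
    fun k a b => (pr_eq_iff.2 ⟨k, rfl, rfl⟩).symm
  have Hf : ∀ a : ℤ, ∃ t : ℤ, ∀ b, pr m l (a, b) ∈ θ ↔ b ≤ t := by
    intro a
    obtain ⟨t, ht, ht'⟩ := Int.exists_greatest_of_bdd (P := fun b => pr m l (a, b) ∈ θ)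
      ⟨b1 + |a - a1| * l, fun z hz => by
        by_contra hlt
        rw [not_le] at hlt
        apply hy
        rw [← sh (-|a - a1|) a1 b1]
        refine up hz ?_ (by linarith)
        have := neg_abs_le (a - a1)
        nlinarith [abs_nonneg (a - a1)]⟩
      ⟨b0 - |a - a0| * l, by
        rw [← sh (|a - a0|) a0 b0] at hx
        refine up hx ?_ le_rfl
        have := le_abs_self (a - a0)
        nlinarith [abs_nonneg (a - a0)]⟩
    exact ⟨t, fun b => ⟨ht' b, fun h => up ht le_rfl h⟩⟩
  have Hg : ∀ b : ℤ, ∃ t : ℤ, ∀ a, pr m l (a, b) ∈ θ ↔ a ≤ t := by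
    intro b
    obtain ⟨t, ht, ht'⟩ := Int.exists_greatest_of_bdd (P := fun a => pr m l (a, b) ∈ θ)
      ⟨a1 + |b - b1| * m, fun z hz => by
        by_contra hlt
        rw [not_le] at hlt
        apply hy
        rw [← sh (|b - b1|) a1 b1]
        refine up hz (by linarith) ?_
        have := neg_abs_le (b - b1)
        nlinarith [abs_nonneg (b - b1)]⟩
      ⟨a0 - |b - b0| * m, by
        rw [← sh (-|b - b0|) a0 b0] at hx
        refine up hx (by linarith) ?_
        have := le_abs_self (b - b0)
        nlinarith [abs_nonneg (b - b0)]⟩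
    exact ⟨t, fun a => ⟨ht' a, fun h => up ht h le_rfl⟩⟩
  choose f hf using Hf
  choose g hg using Hg
  exact ⟨⟨f, g, hm, hl, hf, fun a b => hg b a⟩⟩

/-! ### Sums of consecutive simple roots -/

/-- The sum of the simple roots `α_s + ⋯ + α_{t-1}`, with integer indices read modulo `κ`. -/
noncomputable def iroot (κ : ℕ) (s t : ℤ) : Hw κ :=
  ∑ j ∈ Finset.Ico s t, alphaR κ ((j : ℤ) : ZMod κ)

lemma iroot_add {κ : ℕ} {r s t : ℤ} (h1 : r ≤ s) (h2 : s ≤ t) :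
    iroot κ r s + iroot κ s t = iroot κ r t := by
  rw [iroot, iroot, iroot, ← Finset.sum_union (Finset.Ico_disjoint_Ico_consecutive r s t),
    Finset.Ico_union_Ico_eq_Ico h1 h2]

lemma iroot_succ (κ : ℕ) (s : ℤ) : iroot κ s (s + 1) = alphaR κ (s : ZMod κ) := by
  have : Finset.Ico s (s + 1) = {s} := by ext; simp; omega
  rw [iroot, this, Finset.sum_singleton]

/-- `cnt κ t j` is, up to a term independent of `t`, the number of integers below `t` that are
congruent to `j` modulo `κ`. -/
def cnt (κ : ℕ) (t j : ℤ) : ℤ := (t - 1 - j) / (κ : ℤ)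

lemma ediv_pred {κ : ℕ} (hκ : 0 < κ) (n : ℤ) :
    n / (κ : ℤ) - (n - 1) / (κ : ℤ) = if (κ : ℤ) ∣ n then 1 else 0 := by
  have hκ' : (0 : ℤ) < κ := by exact_mod_cast hκ
  have h1 := Int.mul_ediv_add_emod n κ
  have h2 := Int.emod_nonneg n hκ'.ne'
  have h3 := Int.emod_lt_of_pos n hκ'
  split_ifs with h
  · obtain ⟨k, rfl⟩ := h
    have : ((κ : ℤ) * k - 1) / κ = k - 1 :=
      (Int.ediv_eq_iff_of_pos hκ').2 ⟨by nlinarith, by nlinarith⟩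
    rw [this, Int.mul_ediv_cancel_left _ hκ'.ne']
    ring
  · have h4 : n % κ ≠ 0 := fun h' => h (Int.dvd_of_emod_eq_zero h')
    have h5 : 1 ≤ n % κ := by omega
    have : (n - 1) / (κ : ℤ) = n / κ :=
      (Int.ediv_eq_iff_of_pos hκ').2 ⟨by nlinarith, by nlinarith⟩
    rw [this, sub_self]

lemma iroot_coeff {κ : ℕ} (hκ : 0 < κ) {s t : ℤ} (h : s ≤ t) (j : ℤ) :
    (iroot κ s t).1 (j : ZMod κ) = ((cnt κ t j - cnt κ s j : ℤ) : ℚ) := by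
  induction t, h using Int.leInduction with
  | base => simp [iroot]
  | succ t h ih =>
    rw [← iroot_add h (by omega : t ≤ t + 1), iroot_succ, Prod.fst_add, Pi.add_apply, ih]
    have h1 := ediv_pred hκ (t - j)
    have h2 : (alphaR κ (t : ZMod κ)).1 (j : ZMod κ) =
        (((if (κ : ℤ) ∣ t - j then 1 else 0 : ℤ)) : ℚ) := by
      have : (j : ZMod κ) = (t : ZMod κ) ↔ (κ : ℤ) ∣ t - j :=
        ZMod.intCast_eq_intCast_iff_dvd_sub _ _ _
      simp only [alphaR, Pi.single_apply, this]
      split_ifs <;> simp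
    rw [h2, ← h1]
    simp only [cnt]
    rw [show t + 1 - 1 - j = t - j by ring, show t - j - 1 = t - 1 - j by ring]
    push_cast
    ring

lemma cnt_pred {κ : ℕ} (hκ : 0 < κ) {t j : ℤ} (h : ¬ (κ : ℤ) ∣ t - j) :
    cnt κ t j = cnt κ t (j - 1) := by
  have h1 := ediv_pred hκ (t - j)
  rw [if_neg h] at h1
  simp only [cnt]
  rw [show t - 1 - (j - 1) = t - j by ring, show t - 1 - j = t - j - 1 by ring]
  linarith

lemma cnt_mono {κ : ℕ} (hκ : 0 < κ) {s t : ℤ} (h : s ≤ t) (j : ℤ) :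
    cnt κ s j ≤ cnt κ t j :=
  Int.ediv_le_ediv (by exact_mod_cast hκ) (by omega)

namespace Profile

variable {θ : Set (Cyl m l)} (P : Profile m l θ)


lemma le_iff (a b : ℤ) : b ≤ P.f a ↔ a ≤ P.g b := by rw [← P.hf, P.hg]

/-- The label of the boundary edge of `Θ` at the end of row `a`. -/
def A (a : ℤ) : ℤ := P.f a - a + 1

/-- The label of the boundary edge of `Θ` at the end of column `b`. -/
def B (b : ℤ) : ℤ := b - P.g b

lemma f_anti {a a' : ℤ} (h : a ≤ a') : P.f a' ≤ P.f a := by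
  rw [P.le_iff]
  exact h.trans ((P.le_iff _ _).1 le_rfl)

lemma g_anti {b b' : ℤ} (h : b ≤ b') : P.g b' ≤ P.g b := by
  rw [← P.le_iff]
  exact h.trans ((P.le_iff _ _).2 le_rfl)

lemma mem_shift (a b k : ℤ) : b - k * l ≤ P.f (a + k * m) ↔ b ≤ P.f a := by
  rw [← P.hf, ← P.hf, ← pr_eq_iff.2 ⟨k, rfl, rfl⟩]

lemma A_shift (a k : ℤ) : P.A (a + k * m) = P.A a - k * ((m + l : ℕ) : ℤ) := by
  have h1 := (P.mem_shift a (P.f a) k).2 le_rfl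
  have h2 := (P.mem_shift a (P.f (a + k * m) + k * l) k).1 (by linarith)
  simp only [A]
  push_cast
  linarith

lemma B_shift (b k : ℤ) : P.B (b - k * l) = P.B b - k * ((m + l : ℕ) : ℤ) := by
  have h1 := (P.le_iff _ _).1 ((P.mem_shift (P.g b) b k).2 ((P.le_iff _ _).2 le_rfl))
  have h2 := (P.le_iff _ _).1 ((P.mem_shift (P.g (b - k * l) - k * m) b k).1
    ((P.le_iff _ _).2 (by linarith)))
  simp only [B]
  push_cast
  linarith

lemma A_lt {a a' : ℤ} (h : a < a') : P.A a' < P.A a := by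
  have := P.f_anti h.le
  simp only [A]; linarith

lemma B_lt {b b' : ℤ} (h : b < b') : P.B b < P.B b' := by
  have := P.g_anti h.le
  simp only [B]; linarith

/-- No label belongs to both a row end and a column end. -/
lemma A_ne_B (a b : ℤ) : P.A a ≠ P.B b := by
  intro h
  have := P.le_iff a b
  simp only [A, B] at h
  omega

lemma mem_iff (a b : ℤ) : pr m l (a, b) ∈ θ ↔ P.B b < P.A a := by
  rw [P.hf]
  have := P.le_iff a b
  simp only [A, B]
  omega

lemma exists_A {a t j : ℤ} (h : P.A a = t) (hd : ((m + l : ℕ) : ℤ) ∣ t - j) :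
    ∃ a', P.A a' = j := by
  obtain ⟨k, hk⟩ := hd
  exact ⟨a + k * m, by rw [P.A_shift, h]; linarith⟩

lemma exists_B {b t j : ℤ} (h : P.B b = t) (hd : ((m + l : ℕ) : ℤ) ∣ t - j) :
    ∃ b', P.B b' = j := by
  obtain ⟨k, hk⟩ := hd
  exact ⟨b - k * l, by rw [P.B_shift, h]; linarith⟩

/-! ### The bottom set -/

/-- A cell is a bottom cell when its diagonal successor leaves the diagram. -/
lemma mem_btm (P : Profile m l θ) {a b : ℤ} :
    pr m l (a, b) ∈ btm m l θ ↔ pr m l (a, b) ∈ θ ∧ pr m l (a + 1, b + 1) ∉ θ := by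
  have hm' : (1 : ℤ) ≤ m := by exact_mod_cast P.hm
  have hl' : (1 : ℤ) ≤ l := by exact_mod_cast P.hl
  constructor
  · rintro ⟨i, h1, h2, h3⟩
    refine ⟨h1, fun h => ?_⟩
    obtain ⟨k, h4, h5⟩ := cle_pr.1 (h3 _ h (by rw [← h2, con_pr, con_pr]; congr 1; ring))
    have k1 : k ≤ -1 := by nlinarith
    nlinarith
  · rintro ⟨h1, h2⟩
    refine ⟨_, h1, rfl, fun y hy hc => ?_⟩
    obtain ⟨c, d, rfl⟩ := exists_lift y
    rw [con_pr, con_pr, ZMod.intCast_eq_intCast_iff_dvd_sub] at hc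
    obtain ⟨k, hk⟩ := hc
    push_cast at hk
    rw [P.hf] at hy h2
    -- the lift of `y` with the same integral content as `(a, b)`
    have h4 := (P.mem_shift c d (-k)).2 hy
    have h5 : c + -k * m ≤ a := by
      by_contra hlt
      have h6 := h4.trans (P.f_anti (a := a + 1) (by linarith))
      exact h2 (by linarith)
    exact cle_pr.2 ⟨-k, h5, by linarith⟩

/-- The minimal bottom cells are the outer corners. -/
lemma mem_btmMin (P : Profile m l θ) {a b : ℤ} :
    pr m l (a, b) ∈ btmMin m l θ ↔
      pr m l (a, b) ∈ θ ∧ pr m l (a + 1, b) ∉ θ ∧ pr m l (a, b + 1) ∉ θ := by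
  have hm' : (1 : ℤ) ≤ m := by exact_mod_cast P.hm
  have hl' : (1 : ℤ) ≤ l := by exact_mod_cast P.hl
  constructor
  · rintro ⟨h1, h2⟩
    rw [P.mem_btm] at h1
    refine ⟨h1.1, fun h => ?_, fun h => ?_⟩
    · have h3 := h2 (pr m l (a + 1, b)) (P.mem_btm.2 ⟨h, fun h' => h1.2 ?_⟩)
        (cle_of_le (by linarith) le_rfl)
      · obtain ⟨k, h4, h5⟩ := pr_eq_iff.1 h3
        have : k = 0 := by nlinarith
        simp [this] at h4
      · rw [P.hg] at h' ⊢; linarith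
    · have h3 := h2 (pr m l (a, b + 1)) (P.mem_btm.2 ⟨h, fun h' => h1.2 ?_⟩)
        (cle_of_le le_rfl (by linarith))
      · obtain ⟨k, h4, h5⟩ := pr_eq_iff.1 h3
        have : k = 0 := by nlinarith
        simp [this] at h5
      · rw [P.hf] at h' ⊢; linarith
  · rintro ⟨h1, h2, h3⟩
    refine ⟨P.mem_btm.2 ⟨h1, fun h => h2 ?_⟩, fun y hy hc => ?_⟩
    · rw [P.hf] at h ⊢; linarith
    · obtain ⟨c, d, rfl, hc, hd⟩ := cle_lift_left hc
      have hy := (P.mem_btm.1 hy).1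
      have hca : c ≤ a := by
        by_contra hlt
        refine h2 ((P.hf _ _).2 ?_)
        exact hd.trans (((P.hf _ _).1 hy).trans (P.f_anti (by linarith)))
      have hdb : d ≤ b := by
        by_contra hlt
        refine h3 ((P.hf _ _).2 ?_)
        have := ((P.hf _ _).1 hy).trans (P.f_anti hc)
        linarith
      rw [le_antisymm hca hc, le_antisymm hdb hd]

/-- The maximal bottom cells are the inner corners. -/
lemma mem_btmMax (P : Profile m l θ) {a b : ℤ} :
    pr m l (a, b) ∈ btmMax m l θ ↔
      pr m l (a + 1, b + 1) ∉ θ ∧ pr m l (a + 1, b) ∈ θ ∧ pr m l (a, b + 1) ∈ θ := by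
  have hm' : (1 : ℤ) ≤ m := by exact_mod_cast P.hm
  have hl' : (1 : ℤ) ≤ l := by exact_mod_cast P.hl
  constructor
  · rintro ⟨h1, h2⟩
    rw [P.mem_btm] at h1
    refine ⟨h1.2, ?_, ?_⟩
    · by_contra h
      have h3 := h2 (pr m l (a, b - 1)) (P.mem_btm.2 ⟨?_, ?_⟩) (cle_of_le le_rfl (by linarith))
      · obtain ⟨k, h4, h5⟩ := pr_eq_iff.1 h3
        have : k = 0 := by nlinarith
        simp only [this] at h5; omega
      · rw [P.hf] at h1 ⊢; linarith
      · rwa [sub_add_cancel]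
    · by_contra h
      have h3 := h2 (pr m l (a - 1, b)) (P.mem_btm.2 ⟨?_, ?_⟩) (cle_of_le (by linarith) le_rfl)
      · obtain ⟨k, h4, h5⟩ := pr_eq_iff.1 h3
        have : k = 0 := by nlinarith
        simp only [this] at h4; omega
      · rw [P.hg, P.hg] at h1; rw [P.hg]; linarith
      · rwa [sub_add_cancel]
  · rintro ⟨h1, h2, h3⟩
    refine ⟨P.mem_btm.2 ⟨?_, h1⟩, fun y hy hc => ?_⟩
    · rw [P.hf] at h3 ⊢; linarith
    · obtain ⟨c, d, rfl, hc, hd⟩ := cle_lift_right hc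
      have hy := (P.mem_btm.1 hy).2
      have hca : a ≤ c := by
        by_contra hlt
        refine hy ((P.hf _ _).2 ?_)
        have := ((P.hf _ _).1 h3).trans (P.f_anti (a := c + 1) (by linarith))
        linarith
      have hdb : b ≤ d := by
        by_contra hlt
        refine hy ((P.hf _ _).2 ?_)
        have := ((P.hf _ _).1 h2).trans (P.f_anti (a := c + 1) (by linarith))
        linarith
      rw [le_antisymm hca hc, le_antisymm hdb hd]

/-! ### Hooks as sums of consecutive simple roots -/

/-- A cell together with its arm runs through the contents from its own up to the end of
its row. -/
lemma arm_sum {a b : ℤ} (h : pr m l (a, b) ∈ θ) :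
    alC m l (pr m l (a, b)) + ∑ᶠ y ∈ armSet m l θ (pr m l (a, b)), alC m l y =
      iroot (m + l) (b - a) (P.A a) := by
  have hm' : (1 : ℤ) ≤ m := by exact_mod_cast P.hm
  have hb := (P.hf _ _).1 h
  have hset : armSet m l θ (pr m l (a, b)) =
      (fun j => pr m l (a, j + a)) '' (Finset.Ico (b - a + 1) (P.A a) : Set ℤ) := by
    ext y
    simp only [armSet, Set.mem_ofPred_eq, Set.mem_image, Finset.coe_Ico, Set.mem_Ico, A, pr_add,
      add_zero]
    constructor
    · rintro ⟨hy, k, hk, rfl⟩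
      rw [P.hf] at hy
      exact ⟨b + k - a, ⟨by omega, by omega⟩, by ring_nf⟩
    · rintro ⟨j, ⟨h1, h2⟩, rfl⟩
      refine ⟨(P.hf _ _).2 (by linarith), (j + a - b).toNat, by omega, ?_⟩
      rw [Int.toNat_of_nonneg (by omega)]
      ring_nf
  rw [hset, finsum_mem_image, finsum_mem_coe_finset, iroot,
    ← Finset.insert_Ico_add_one_left_eq_Ico (a := b - a) (by simp only [A]; omega),
    Finset.sum_insert (by simp)]
  · congr 1
    refine Finset.sum_congr rfl fun j _ => ?_
    rw [alC, con_pr, add_sub_cancel_right]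
  · intro j _ j' _ hj
    obtain ⟨k, h1, h2⟩ := pr_eq_iff.1 hj
    have : k = 0 := by nlinarith
    simp only [this] at h2
    linarith

lemma leg_set {a b : ℤ} : legSet m l θ (pr m l (a, b)) =
      (fun j => pr m l (b - j, b)) '' (Finset.Ico (P.B b) (b - a) : Set ℤ) := by
  ext y
  simp only [legSet, Set.mem_ofPred_eq, Set.mem_image, Finset.coe_Ico, Set.mem_Ico, B, pr_add,
    add_zero]
  constructor
  · rintro ⟨hy, k, hk, rfl⟩
    rw [P.hg] at hy
    exact ⟨b - (a + k), ⟨by omega, by omega⟩, by ring_nf⟩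
  · rintro ⟨j, ⟨h1, h2⟩, rfl⟩
    refine ⟨(P.hg _ _).2 (by linarith), (b - j - a).toNat, by omega, ?_⟩
    rw [Int.toNat_of_nonneg (by omega)]
    ring_nf

lemma leg_sum' {a b : ℤ} :
    ∑ᶠ y ∈ legSet m l θ (pr m l (a, b)), alC m l y = iroot (m + l) (P.B b) (b - a) := by
  have hl' : (1 : ℤ) ≤ l := by exact_mod_cast P.hl
  rw [P.leg_set, finsum_mem_image, finsum_mem_coe_finset, iroot]
  · refine Finset.sum_congr rfl fun j _ => ?_
    rw [alC, con_pr, sub_sub_cancel]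
  · intro j _ j' _ hj
    obtain ⟨k, h1, h2⟩ := pr_eq_iff.1 hj
    have : k = 0 := by nlinarith
    simp only [this] at h1
    linarith

/-- A cell together with its leg runs through the contents from the end of its column up to
its own. -/
lemma leg_sum {a b : ℤ} (h : pr m l (a, b) ∈ θ) :
    alC m l (pr m l (a, b)) + ∑ᶠ y ∈ legSet m l θ (pr m l (a, b)), alC m l y =
      iroot (m + l) (P.B b) (b - a + 1) := by
  have ha := (P.hg _ _).1 h
  rw [P.leg_sum', ← iroot_add (s := b - a) (t := b - a + 1) (by simp only [B]; omega) (by omega), iroot_succ,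
    add_comm (iroot _ _ _)]
  rfl

/-- A hook is an interval of simple roots running from a column-end label to a row-end label. -/
lemma hk_eq {a b : ℤ} (h : pr m l (a, b) ∈ θ) :
    hk m l θ (pr m l (a, b)) = iroot (m + l) (P.B b) (P.A a) := by
  have ha := (P.hg _ _).1 h
  have hb := (P.hf _ _).1 h
  rw [hk, P.arm_sum h, P.leg_sum', add_comm (iroot _ _ _),
    iroot_add (by simp only [B]; omega) (by simp only [A]; omega)]

/-! ### Monotonicity of the hook map -/

/-- Consecutive row-end labels bound an element of `Π_θ`: that of the bottom cell
`(a - 1, f a)`, which is maximal exactly when `f a < f (a - 1)`. -/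
lemma A_step (a : ℤ) : iroot (m + l) (P.A a) (P.A (a - 1)) ∈ PiTheta m l θ := by
  have hanti := P.f_anti (a := a - 1) (a' := a) (by omega)
  have h0 : pr m l (a - 1, P.f a) ∈ θ := (P.hf _ _).2 hanti
  have h1 : pr m l (a - 1 + 1, P.f a + 1) ∉ θ := by
    rw [P.hf, sub_add_cancel]; omega
  have h2 : pr m l (a - 1 + 1, P.f a) ∈ θ := by
    rw [P.hf, sub_add_cancel]
  rcases hanti.eq_or_lt with h | h
  · refine Or.inl (Or.inl ⟨pr m l (a - 1, P.f a), P.mem_btm.2 ⟨h0, h1⟩, fun hM => ?_,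
      fun hM => (P.mem_btmMin.1 hM).2.1 h2, ?_⟩)
    · have := (P.hf _ _).1 (P.mem_btmMax.1 hM).2.2
      omega
    · have : P.A (a - 1) = P.A a + 1 := by simp only [A]; omega
      rw [this, iroot_succ, alC, con_pr, A]
      congr 2; ring
  · refine Or.inl (Or.inr ⟨pr m l (a - 1, P.f a), P.mem_btmMax.2 ⟨h1, h2, ?_⟩, ?_⟩)
    · rw [P.hf]; omega
    · rw [P.arm_sum h0]
      congr 1; simp only [A]; ring

/-- Consecutive column-end labels bound an element of `Π_θ`: that of the bottom cell
`(g b, b - 1)`, which is maximal exactly when `g b < g (b - 1)`. -/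
lemma B_step (b : ℤ) : iroot (m + l) (P.B (b - 1)) (P.B b) ∈ PiTheta m l θ := by
  have hanti := P.g_anti (b := b - 1) (b' := b) (by omega)
  have h0 : pr m l (P.g b, b - 1) ∈ θ := (P.hg _ _).2 hanti
  have h1 : pr m l (P.g b + 1, b - 1 + 1) ∉ θ := by
    rw [P.hg, sub_add_cancel]; omega
  have h2 : pr m l (P.g b, b - 1 + 1) ∈ θ := by
    rw [P.hg, sub_add_cancel]
  rcases hanti.eq_or_lt with h | h
  · refine Or.inl (Or.inl ⟨pr m l (P.g b, b - 1), P.mem_btm.2 ⟨h0, h1⟩, fun hM => ?_,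
      fun hM => (P.mem_btmMin.1 hM).2.2 h2, ?_⟩)
    · have := (P.hg _ _).1 (P.mem_btmMax.1 hM).2.1
      omega
    · have : P.B b = P.B (b - 1) + 1 := by simp only [B]; omega
      rw [this, iroot_succ, alC, con_pr, B, h]
  · refine Or.inr ⟨pr m l (P.g b, b - 1), P.mem_btmMax.2 ⟨h1, ?_, h2⟩, ?_⟩
    · rw [P.hg]; omega
    · rw [P.leg_sum h0]
      congr 1; simp only [B]; ring

lemma A_le {a a' : ℤ} (h : a ≤ a') : P.A a' ≤ P.A a := by
  have := P.f_anti h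
  simp only [A]; linarith

lemma B_le {b b' : ℤ} (h : b ≤ b') : P.B b ≤ P.B b' := by
  have := P.g_anti h
  simp only [B]; linarith

/-- Moving from row `a` up to row `a'` changes the hook by a sum of elements of `Π_θ`. -/
lemma A_interval {a a' : ℤ} (h : a' ≤ a) :
    iroot (m + l) (P.A a) (P.A a') ∈ AddSubmonoid.closure (PiTheta m l θ) := by
  induction a, h using Int.leInduction with
  | base => simp [iroot]
  | succ a h ih =>
    have h1 := P.A_step (a + 1)
    rw [add_sub_cancel_right] at h1
    rw [← iroot_add (P.A_le (by omega : a ≤ a + 1)) (P.A_le h)]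
    exact add_mem (AddSubmonoid.subset_closure h1) ih

/-- Moving from column `b` back to column `b'` changes the hook by a sum of elements of `Π_θ`. -/
lemma B_interval {b b' : ℤ} (h : b' ≤ b) :
    iroot (m + l) (P.B b') (P.B b) ∈ AddSubmonoid.closure (PiTheta m l θ) := by
  induction b, h using Int.leInduction with
  | base => simp [iroot]
  | succ b h ih =>
    have h1 := P.B_step (b + 1)
    rw [add_sub_cancel_right] at h1
    rw [← iroot_add (P.B_le h) (P.B_le (by omega : b ≤ b + 1))]
    exact add_mem ih (AddSubmonoid.subset_closure h1)

lemma trile_of_cle (P : Profile m l θ) {x y : Cyl m l} (hx : x ∈ θ) (hy : y ∈ θ) (h : cle m l x y) :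
    trile m l θ (hk m l θ x) (hk m l θ y) := by
  obtain ⟨a, b, rfl⟩ := exists_lift x
  obtain ⟨c, d, rfl, hc, hd⟩ := cle_lift_right h
  have e : hk m l θ (pr m l (c, d)) - hk m l θ (pr m l (a, b)) =
      iroot (m + l) (P.B d) (P.B b) + iroot (m + l) (P.A a) (P.A c) := by
    have h1 := ((P.mem_iff _ _).1 hx).le
    rw [P.hk_eq hx, P.hk_eq hy, sub_eq_iff_eq_add, ← iroot_add (P.B_le hd) (h1.trans (P.A_le hc)),
      ← iroot_add h1 (P.A_le hc)]
    abel
  rw [trile, e]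
  exact add_mem (P.B_interval hd) (P.A_interval hc)

/-! ### The hook map reflects the order -/

/-- `U` jumps only at row-end labels. -/
def ARigid (U : ℤ → ℚ) : Prop := ∀ j, (∀ a, P.A a ≠ j) → U j = U (j - 1)

/-- `W` jumps only at column-end labels. -/
def BRigid (W : ℤ → ℚ) : Prop := ∀ j, (∀ b, P.B b ≠ j) → W j = W (j - 1)

lemma κ_pos (P : Profile m l θ) : 0 < m + l := by have := P.hm; omega

lemma cnt_A {a t : ℤ} (h : P.A a = t) : P.ARigid (fun j => (cnt (m + l) t j : ℚ)) := by
  intro j hj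
  have : ¬ ((m + l : ℕ) : ℤ) ∣ t - j := fun hd => by
    obtain ⟨a', ha'⟩ := P.exists_A h hd
    exact hj a' ha'
  simp only [cnt_pred P.κ_pos this]

lemma cnt_B {b t : ℤ} (h : P.B b = t) : P.BRigid (fun j => (cnt (m + l) t j : ℚ)) := by
  intro j hj
  have : ¬ ((m + l : ℕ) : ℤ) ∣ t - j := fun hd => by
    obtain ⟨b', hb'⟩ := P.exists_B h hd
    exact hj b' hb'
  simp only [cnt_pred P.κ_pos this]

/-- The coefficients of `v` split as a nonnegative function with jumps only at row ends plus
one with jumps only at column ends. -/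
def Splits (v : Hw (m + l)) : Prop :=
  ∃ U W : ℤ → ℚ, P.ARigid U ∧ P.BRigid W ∧ (∀ j, 0 ≤ U j) ∧ (∀ j, 0 ≤ W j) ∧
    ∀ j : ℤ, v.1 (j : ZMod (m + l)) = U j + W j

lemma splits_A {a a' : ℤ} {s t : ℤ} (hs : P.A a = s) (ht : P.A a' = t) (h : s ≤ t) :
    P.Splits (iroot (m + l) s t) := by
  refine ⟨fun j => (cnt (m + l) t j : ℚ) - cnt (m + l) s j, fun _ => 0, fun j hj => ?_,
    fun _ _ => rfl, fun j => ?_, fun _ => le_rfl, fun j => ?_⟩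
  · exact congrArg₂ (· - ·) (P.cnt_A ht j hj) (P.cnt_A hs j hj)
  · rw [sub_nonneg]; exact_mod_cast cnt_mono P.κ_pos h j
  · rw [iroot_coeff P.κ_pos h]; push_cast; ring

lemma splits_B {b b' : ℤ} {s t : ℤ} (hs : P.B b = s) (ht : P.B b' = t) (h : s ≤ t) :
    P.Splits (iroot (m + l) s t) := by
  refine ⟨fun _ => 0, fun j => (cnt (m + l) t j : ℚ) - cnt (m + l) s j, fun _ _ => rfl,
    fun j hj => ?_, fun _ => le_rfl, fun j => ?_, fun j => ?_⟩
  · exact congrArg₂ (· - ·) (P.cnt_B ht j hj) (P.cnt_B hs j hj)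
  · rw [sub_nonneg]; exact_mod_cast cnt_mono P.κ_pos h j
  · rw [iroot_coeff P.κ_pos h]; push_cast; ring

/-- Each element of `Π_θ` is an interval of simple roots between two row-end labels or between
two column-end labels. -/
lemma splits_generator {v : Hw (m + l)} (hv : v ∈ PiTheta m l θ) : P.Splits v := by
  have mA : ∀ {a b : ℤ}, pr m l (a, b) ∈ θ → pr m l (a, b + 1) ∉ θ → P.A a = b - a + 1 := by
    intro a b h h'
    rw [P.hf] at h h'
    simp only [A]; omega
  have mB : ∀ {a b : ℤ}, pr m l (a, b) ∈ θ → pr m l (a + 1, b) ∉ θ → P.B b = b - a := by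
    intro a b h h'
    rw [P.hg] at h h'
    simp only [B]; omega
  rcases hv with (⟨x, h1, h2, h3, rfl⟩ | ⟨x, h1, rfl⟩) | ⟨x, h1, rfl⟩
  · obtain ⟨a, b, rfl⟩ := exists_lift x
    rw [P.mem_btmMax] at h2
    rw [P.mem_btmMin] at h3
    rw [P.mem_btm] at h1
    have e : alC m l (pr m l (a, b)) = iroot (m + l) (b - a) (b - a + 1) := by
      rw [iroot_succ]; rfl
    rw [e]
    by_cases h4 : pr m l (a + 1, b) ∈ θ
    · have h5 : pr m l (a, b + 1) ∉ θ := fun h => h2 ⟨h1.2, h4, h⟩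
      refine P.splits_A (a := a + 1) ?_ (mA h1.1 h5) (by omega)
      rw [mA h4 h1.2]; ring
    · have h5 : pr m l (a, b + 1) ∈ θ := by
        by_contra h
        exact h3 ⟨h1.1, h4, h⟩
      refine P.splits_B (mB h1.1 h4) (b' := b + 1) ?_ (by omega)
      rw [mB h5 h1.2]; ring
  · obtain ⟨a, b, rfl⟩ := exists_lift x
    have h0 := (P.mem_btm.1 h1.1).1
    rw [P.mem_btmMax] at h1
    rw [P.arm_sum h0]
    refine P.splits_A (a := a + 1) (a' := a) ?_ rfl ?_
    · rw [mA h1.2.1 h1.1]; ring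
    · rw [P.hf] at h0; simp only [A]; omega
  · obtain ⟨a, b, rfl⟩ := exists_lift x
    have h0 := (P.mem_btm.1 h1.1).1
    rw [P.mem_btmMax] at h1
    rw [P.leg_sum h0]
    refine P.splits_B (b := b) (b' := b + 1) rfl ?_ ?_
    · rw [mB h1.2.2 h1.1]; ring
    · rw [P.hg] at h0; simp only [B]; omega

lemma splits_closure {v : Hw (m + l)} (hv : v ∈ AddSubmonoid.closure (PiTheta m l θ)) :
    P.Splits v := by
  induction hv using AddSubmonoid.closure_induction with
  | mem v hv => exact P.splits_generator hv
  | zero =>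
    exact ⟨fun _ => 0, fun _ => 0, fun _ _ => rfl, fun _ _ => rfl, fun _ => le_rfl,
      fun _ => le_rfl, fun _ => by simp⟩
  | add v w _ _ hv hw =>
    obtain ⟨U, W, h1, h2, h3, h4, h5⟩ := hv
    obtain ⟨U', W', h1', h2', h3', h4', h5'⟩ := hw
    refine ⟨fun j => U j + U' j, fun j => W j + W' j,
      fun j hj => congrArg₂ (· + ·) (h1 j hj) (h1' j hj),
      fun j hj => congrArg₂ (· + ·) (h2 j hj) (h2' j hj),
      fun j => add_nonneg (h3 j) (h3' j), fun j => add_nonneg (h4 j) (h4' j), fun j => ?_⟩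
    rw [Prod.fst_add, Pi.add_apply, h5, h5']
    ring

/-- The coefficients of `hk y - hk x` split, by counting, into a row part and a column part. Any
other such splitting differs from this one by moving a constant from one part to the other;
comparing with a nonnegative splitting gives the multiple of `ω` that brings the lift of `y`
above the lift of `x`. -/
lemma cle_of_trile (P : Profile m l θ) {x y : Cyl m l} (hx : x ∈ θ) (hy : y ∈ θ)
    (h : trile m l θ (hk m l θ x) (hk m l θ y)) : cle m l x y := by
  obtain ⟨a, b, rfl⟩ := exists_lift x
  obtain ⟨c, d, rfl⟩ := exists_lift y
  obtain ⟨U, W, hU, hW, hU0, hW0, hUW⟩ := P.splits_closure h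
  have hκ : (0 : ℤ) < ((m + l : ℕ) : ℤ) := by exact_mod_cast P.κ_pos
  have key : ∀ j : ℤ, ((cnt (m + l) (P.A c) j : ℚ) - cnt (m + l) (P.A a) j) - U j =
      W j - ((cnt (m + l) (P.B b) j : ℚ) - cnt (m + l) (P.B d) j) := by
    intro j
    have h1 := hUW j
    rw [P.hk_eq hx, P.hk_eq hy, Prod.fst_sub, Pi.sub_apply,
      iroot_coeff P.κ_pos ((P.mem_iff _ _).1 hx).le,
      iroot_coeff P.κ_pos ((P.mem_iff _ _).1 hy).le] at h1
    push_cast at h1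
    linarith
  -- Both sides of `key` are constant in `j`, because no label is both a row end and a column end.
  have step : ∀ j : ℤ, ((cnt (m + l) (P.A c) j : ℚ) - cnt (m + l) (P.A a) j) - U j =
      ((cnt (m + l) (P.A c) (j - 1) : ℚ) - cnt (m + l) (P.A a) (j - 1)) - U (j - 1) := by
    intro j
    by_cases hj : ∃ a', P.A a' = j
    · obtain ⟨a', ha'⟩ := hj
      have hj : ∀ b', P.B b' ≠ j := fun b' hb' => P.A_ne_B a' b' (ha'.trans hb'.symm)
      have h1 := P.cnt_B (rfl : P.B b = P.B b) j hj
      have h2 := P.cnt_B (rfl : P.B d = P.B d) j hj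
      simp only at h1 h2
      rw [key, key, hW j hj, h1, h2]
    · have hj : ∀ a', P.A a' ≠ j := fun a' ha' => hj ⟨a', ha'⟩
      have h1 := P.cnt_A (rfl : P.A a = P.A a) j hj
      have h2 := P.cnt_A (rfl : P.A c = P.A c) j hj
      simp only at h1 h2
      rw [hU j hj, h1, h2]
  obtain ⟨C, hC⟩ : ∃ C : ℚ, ∀ j : ℤ,
      ((cnt (m + l) (P.A c) j : ℚ) - cnt (m + l) (P.A a) j) - U j = C := by
    refine ⟨((cnt (m + l) (P.A c) 0 : ℚ) - cnt (m + l) (P.A a) 0) - U 0, fun j => ?_⟩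
    induction j using Int.induction_on with
    | zero => rfl
    | succ i ih => rw [step, add_sub_cancel_right, ih]
    | pred i ih => rw [← step, ih]
  -- Evaluate the row part at `A a - 1` and the column part at `B b`.
  have e1 : C ≤ cnt (m + l) (P.A c) (P.A a - 1) := by
    have h1 := hC (P.A a - 1)
    have h2 : cnt (m + l) (P.A a) (P.A a - 1) = 0 := by simp [cnt]
    rw [h2] at h1
    push_cast at h1
    linarith [hU0 (P.A a - 1)]
  have e2 : (cnt (m + l) (P.B d) (P.B b) : ℚ) + 1 ≤ C := by
    have h1 := hC (P.B b)
    rw [key] at h1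
    have h2 : cnt (m + l) (P.B b) (P.B b) = -1 := by
      simp only [cnt]
      exact (Int.ediv_eq_iff_of_pos hκ).2 ⟨by linarith, by linarith⟩
    rw [h2] at h1
    push_cast at h1
    linarith [hW0 (P.B b)]
  -- The integer `k` is the multiple of `ω` by which the lift of `y` has to be moved.
  set k : ℤ := cnt (m + l) (P.A c) (P.A a - 1) with hk
  have e3 : cnt (m + l) (P.B d) (P.B b) + 1 ≤ k := by exact_mod_cast e2.trans e1
  refine cle_pr.2 ⟨k, ?_, ?_⟩
  · by_contra hlt
    have h1 := P.A_lt (not_le.1 hlt)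
    rw [P.A_shift] at h1
    have h2 : k * ((m + l : ℕ) : ℤ) ≤ P.A c - 1 - (P.A a - 1) := Int.ediv_mul_le _ hκ.ne'
    linarith
  · by_contra hlt
    have h1 := P.B_lt (not_le.1 hlt)
    rw [P.B_shift] at h1
    have h2 : P.B d - 1 - P.B b < (cnt (m + l) (P.B d) (P.B b) + 1) * ((m + l : ℕ) : ℤ) :=
      Int.lt_ediv_add_one_mul_self _ hκ
    nlinarith

end Profile

end

/-- Theorem 3.9: hk : (θ, ≤) → (R(w_θ), ⊴) is an order isomorphism. -/
theorem statement_10 (m l : ℕ) (hm : 1 ≤ m) (hl : 1 ≤ l)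
    (θ : Set (Cyl m l)) (hθ : IsCylindric m l θ) :
    Set.BijOn (hk m l θ) θ (RwTheta m l θ) ∧
    ∀ x ∈ θ, ∀ y ∈ θ,
      (cle m l x y ↔ trile m l θ (hk m l θ x) (hk m l θ y)) := by
  obtain ⟨P⟩ := exists_profile hm hl hθ
  refine ⟨⟨Set.mapsTo_image _ _, fun x hx y hy hxy => ?_, Set.surjOn_image _ _⟩,
    fun x hx y hy => ⟨P.trile_of_cle hx hy, P.cle_of_trile hx hy⟩⟩
  refine cle_antisymm hm hl (P.cle_of_trile hx hy ?_) (P.cle_of_trile hy hx ?_) <;>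
  · rw [trile, hxy, sub_self]
    exact zero_mem _

end CylPaper
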